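/- Let B ⊆ A be a non-degenerate C*-inclusion and J a proper closed two-sided ideal of B such that the set N_A(B) ∩ N_A(J) generates A^reg as a C*-subalgebra of A. Then L, the closed linear span of {a₁ x a₂ : x ∈ J, a₁, a₂ ∈ A^reg}, is a proper closed two-sided ideal of A^reg. -/

import Mathlib

/-- The set of normalizers of `S`: `{n | n S n* ⊆ S and n* S n ⊆ S}`. -/
def normalizerIn {R : Type*} [Mul R] [Star R] (S : Set R) : Set R :=
  {n | ∀ s ∈ S, n * s * star n ∈ S ∧ star n * s * n ∈ S}

/-- `A^reg`: the C*-subalgebra of `A` generated by the normalizers `N_A(B)`. -/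
def ARegSet {A : Type*} [NonUnitalCStarAlgebra A] (Bs : Set A) : Set A :=
  closure (NonUnitalStarAlgebra.adjoin ℂ (normalizerIn Bs) : Set A)

/-- Non-degeneracy of the inclusion `Bs ⊆ A`. -/
def NondegSet {A : Type*} [NonUnitalCStarAlgebra A] (Bs : Set A) : Prop :=
  closure (Submodule.span ℂ {x : A | ∃ b ∈ Bs, ∃ a : A, x = b * a} : Set A) = Set.univ

/-- `J` is a closed two-sided ideal of (the C*-subalgebra with underlying set) `Bs`. -/
def IsClosedIdealOf {A : Type*} [NonUnitalCStarAlgebra A] (J Bs : Set A) : Prop :=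
  J ⊆ Bs ∧ IsClosed J ∧ (0 : A) ∈ J ∧
  (∀ x ∈ J, ∀ y ∈ J, x + y ∈ J) ∧ (∀ c : ℂ, ∀ x ∈ J, c • x ∈ J) ∧
  (∀ x ∈ J, ∀ b ∈ Bs, b * x ∈ J ∧ x * b ∈ J)

/-- The closed linear span of `{a₁ x a₂ : x ∈ J, a₁, a₂ ∈ R}`. -/
def inducedIdeal {A : Type*} [NonUnitalCStarAlgebra A] (J R : Set A) : Set A :=
  closure (Submodule.span ℂ
    {x : A | ∃ j ∈ J, ∃ a₁ ∈ R, ∃ a₂ ∈ R, x = a₁ * j * a₂} : Set A)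

/-!
Let `u` run along an approximate unit of `J`. By the C*-identity, `u * x → x` as soon as
`x * star x ∈ J`. If `n` normalizes `J` and `j ∈ J`, then `(n * j) * star (n * j) ∈ J`, so
`u * (n * j) → n * j`. The elements `y` with `u * y → y` form a closed right ideal of `A`, which
therefore contains `L`. Since `u * b ∈ J` for `b ∈ B`, it meets `B` only in `J`, so `L` cannot
contain `B`, whereas `A^reg` does.
-/

open Filter Topology

section Normalizer

theorem mul_mem_normalizerIn {R : Type*} [Semigroup R] [StarMul R] {S : Set R} {m n : R}
    (hm : m ∈ normalizerIn S) (hn : n ∈ normalizerIn S) : m * n ∈ normalizerIn S := fun s hs =>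
  ⟨by simpa only [star_mul, mul_assoc] using (hm _ (hn s hs).1).1,
    by simpa only [star_mul, mul_assoc] using (hn _ (hm s hs).2).2⟩

theorem star_mem_normalizerIn {R : Type*} [Mul R] [InvolutiveStar R] {S : Set R} {n : R}
    (hn : n ∈ normalizerIn S) : star n ∈ normalizerIn S := fun s hs =>
  ⟨by simpa only [star_star] using (hn s hs).2, by simpa only [star_star] using (hn s hs).1⟩

theorem mem_normalizerIn_of_mem {R M : Type*} [Mul R] [Star R] [SetLike M R] [MulMemClass M R]
    [StarMemClass M R] {B : M} {b : R} (hb : b ∈ B) : b ∈ normalizerIn (B : Set R) := fun _ hs =>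
  ⟨mul_mem (mul_mem hb hs) (star_mem hb), mul_mem (mul_mem (star_mem hb) hs) hb⟩

/-- The normalizers of `S`, bundled as a subsemigroup so that the star algebra they generate can be
computed as a linear span. -/
def normalizerSubsemigroup {R : Type*} [Semigroup R] [StarMul R] (S : Set R) : Subsemigroup R where
  carrier := normalizerIn S
  mul_mem' := mul_mem_normalizerIn

theorem adjoin_normalizerIn_toSubmodule (R : Type*) {A : Type*} [CommSemiring R] [StarRing R]
    [NonUnitalSemiring A] [StarRing A] [Module R A] [IsScalarTower R A A] [SMulCommClass R A A]
    [StarModule R A] (S : Set A) :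
    (NonUnitalStarAlgebra.adjoin R (normalizerIn S)).toSubmodule =
      Submodule.span R (normalizerIn S) := by
  have hstar : star (normalizerIn S) ⊆ normalizerIn S := fun n hn => by
    simpa only [star_star] using star_mem_normalizerIn hn
  rw [NonUnitalStarAlgebra.adjoin_eq_span, Set.union_eq_self_of_subset_right hstar]
  exact congrArg (fun N : Subsemigroup A => Submodule.span R (N : Set A))
    (normalizerSubsemigroup S).closure_eq

end Normalizer

section ApproximateUnit

/-- The elements `y` of `A` for which the filter `l` acts as an approximate left unit, that is,
`u * y` tends to `y` as `u` runs along `l`. -/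
def approxLeftFixed (R : Type*) {A : Type*} [Semiring R] [NonUnitalNonAssocSemiring A]
    [TopologicalSpace A] [ContinuousAdd A] [Module R A] [SMulCommClass R A A]
    [ContinuousConstSMul R A] (l : Filter A) : Submodule R A where
  carrier := {y | Tendsto (· * y) l (𝓝 y)}
  zero_mem' := by simpa only [Set.mem_ofPred_eq, mul_zero] using tendsto_const_nhds
  add_mem' {y z} hy hz := by
    simpa only [Set.mem_ofPred_eq, mul_add] using Tendsto.add hy hz
  smul_mem' c y hy := by
    simpa only [Set.mem_ofPred_eq, mul_smul_comm] using Tendsto.const_smul hy c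

theorem mul_mem_approxLeftFixed {R A : Type*} [Semiring R] [NonUnitalSemiring A]
    [TopologicalSpace A] [ContinuousAdd A] [SeparatelyContinuousMul A] [Module R A]
    [SMulCommClass R A A] [ContinuousConstSMul R A] {l : Filter A} {y : A}
    (hy : y ∈ approxLeftFixed R l) (a : A) : y * a ∈ approxLeftFixed R l := by
  have hya : Tendsto (fun u => u * y * a) l (𝓝 (y * a)) := Tendsto.mul_const a hy
  exact hya.congr fun u => mul_assoc u y a

theorem isClosed_approxLeftFixed (R : Type*) {A : Type*} [Semiring R] [NonUnitalSeminormedRing A]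
    [Module R A] [SMulCommClass R A A] [ContinuousConstSMul R A] {l : Filter A} {C : ℝ}
    (hl : ∀ᶠ u in l, ‖u‖ ≤ C) : IsClosed (approxLeftFixed R l : Set A) := by
  have hLipschitz (u : {u : A // ‖u‖ ≤ C}) : LipschitzWith C.toNNReal (fun y : A => (u : A) * y) :=
    LipschitzWith.of_dist_le_mul fun y z => by
      rw [dist_eq_norm, dist_eq_norm, ← mul_sub]
      exact (norm_mul_le _ _).trans <| by gcongr; exact u.2.trans (Real.le_coe_toNNReal C)
  have hclosed := (LipschitzWith.uniformEquicontinuous _ _ hLipschitz).equicontinuous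
    |>.isClosed_setOfPred_tendsto (l := comap Subtype.val l) continuous_id
  have hrange : Set.range (Subtype.val : {u : A // ‖u‖ ≤ C} → A) ∈ l :=
    hl.mono fun u hu => ⟨⟨u, hu⟩, rfl⟩
  convert hclosed using 1
  ext y
  exact (tendsto_comap'_iff (m := (· * y)) hrange).symm

theorem norm_mul_sub_self_sq_le {A : Type*} [NonUnitalNormedRing A] [StarRing A] [CStarRing A]
    (u x : A) :
    ‖u * x - x‖ ^ 2 ≤ (1 + ‖u‖) * ‖u * (x * star x) - x * star x‖ := by
  set d := u * (x * star x) - x * star x with hd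
  have hexpand : (u * x - x) * star (u * x - x) = d * star u - d := by
    simp only [hd, star_sub, star_mul]
    noncomm_ring
  calc ‖u * x - x‖ ^ 2 = ‖d * star u - d‖ := by rw [sq, ← CStarRing.norm_self_mul_star, hexpand]
    _ ≤ ‖d * star u‖ + ‖d‖ := norm_sub_le _ _
    _ ≤ ‖d‖ * ‖star u‖ + ‖d‖ := by gcongr; exact norm_mul_le _ _
    _ = (1 + ‖u‖) * ‖d‖ := by rw [norm_star]; ring

theorem mem_approxLeftFixed_of_mul_star_self_mem {R A : Type*} [Semiring R] [NonUnitalNormedRing A]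
    [StarRing A] [CStarRing A] [Module R A] [SMulCommClass R A A] [ContinuousConstSMul R A]
    {l : Filter A} {C : ℝ} (hl : ∀ᶠ u in l, ‖u‖ ≤ C) {x : A}
    (hx : x * star x ∈ approxLeftFixed R l) : x ∈ approxLeftFixed R l := by
  have hbound : Tendsto (fun u => (1 + C) * ‖u * (x * star x) - x * star x‖) l (𝓝 0) := by
    simpa only [mul_zero] using (tendsto_iff_norm_sub_tendsto_zero.1 hx).const_mul (1 + C)
  have hsq : Tendsto (fun u => ‖u * x - x‖ ^ 2) l (𝓝 0) := by
    refine squeeze_zero' (.of_forall fun _ => sq_nonneg _) ?_ hbound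
    filter_upwards [hl] with u hu
    exact (norm_mul_sub_self_sq_le u x).trans (by gcongr)
  refine tendsto_iff_norm_sub_tendsto_zero.2 ?_
  simpa only [Real.sqrt_sq (norm_nonneg _), Real.sqrt_zero] using hsq.sqrt

theorem exists_approximateUnit_of_isClosed {A : Type*} [NonUnitalCStarAlgebra A]
    {S : NonUnitalStarSubalgebra ℂ A} (hS : IsClosed (S : Set A)) :
    ∃ l : Filter A, l.NeBot ∧ (∀ᶠ u in l, u ∈ S) ∧ (∀ᶠ u in l, ‖u‖ ≤ 1) ∧
      (S : Set A) ⊆ approxLeftFixed ℂ l := by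
  have := hS
  let _ : PartialOrder S := CStarAlgebra.spectralOrder S
  have := CStarAlgebra.spectralOrderedRing S
  have hl := CStarAlgebra.increasingApproximateUnit S
  refine ⟨(CStarAlgebra.approximateUnit S).map Subtype.val, inferInstance,
    eventually_map.2 (.of_forall Subtype.property), eventually_map.2 hl.eventually_norm,
    fun x hx => ?_⟩
  exact tendsto_map'_iff.2 <|
    (continuous_subtype_val.tendsto _).comp (hl.tendsto_mul_right ⟨x, hx⟩)

end ApproximateUnit

section Ideal

variable {A : Type*} [NonUnitalCStarAlgebra A]

/-- The self-adjoint part `J ∩ J*` of a closed ideal `J`, as a star subalgebra. Having it before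
`J = J*` is known gives access to approximate units. -/
def IsClosedIdealOf.starSubalgebra {J Bs : Set A} (hJ : IsClosedIdealOf J Bs) :
    NonUnitalStarSubalgebra ℂ A where
  carrier := {x | x ∈ J ∧ star x ∈ J}
  zero_mem' := by
    obtain ⟨-, -, hzero, -, -, -⟩ := hJ
    exact ⟨hzero, by rwa [star_zero]⟩
  add_mem' := by
    obtain ⟨-, -, -, hadd, -, -⟩ := hJ
    rintro x y ⟨hx, hx'⟩ ⟨hy, hy'⟩
    exact ⟨hadd x hx y hy, by simpa only [star_add] using hadd _ hx' _ hy'⟩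
  mul_mem' := by
    obtain ⟨hJB, -, -, -, -, hmul⟩ := hJ
    rintro x y ⟨hx, hx'⟩ ⟨hy, hy'⟩
    exact ⟨(hmul x hx y (hJB hy)).2, by simpa only [star_mul] using (hmul _ hx' _ (hJB hy')).1⟩
  smul_mem' := by
    obtain ⟨-, -, -, -, hsmul, -⟩ := hJ
    rintro c x ⟨hx, hx'⟩
    exact ⟨hsmul c x hx, by simpa only [star_smul] using hsmul _ _ hx'⟩
  star_mem' := by
    rintro x ⟨hx, hx'⟩
    exact ⟨hx', by simpa only [star_star] using hx⟩

theorem IsClosedIdealOf.exists_approximateUnit {J Bs : Set A} (hJ : IsClosedIdealOf J Bs) :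
    ∃ l : Filter A, l.NeBot ∧ (∀ᶠ u in l, u ∈ J) ∧ (∀ᶠ u in l, ‖u‖ ≤ 1) ∧
      ∀ x : A, x * star x ∈ J → x ∈ approxLeftFixed ℂ l := by
  have hclosed : IsClosed (hJ.starSubalgebra : Set A) :=
    hJ.2.1.inter (hJ.2.1.preimage continuous_star)
  obtain ⟨l, hne, hmem, hnorm, hfixed⟩ := exists_approximateUnit_of_isClosed hclosed
  refine ⟨l, hne, hmem.mono fun _ hu => hu.1, hnorm, fun x hx => ?_⟩
  refine mem_approxLeftFixed_of_mul_star_self_mem hnorm (hfixed ⟨hx, ?_⟩)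
  rwa [star_mul, star_star]

theorem subset_aRegSet (B : NonUnitalStarSubalgebra ℂ A) : (B : Set A) ⊆ ARegSet (B : Set A) :=
  fun _ hb => subset_closure (NonUnitalStarAlgebra.subset_adjoin ℂ _ (mem_normalizerIn_of_mem hb))

theorem aRegSet_subset {S : Set A} {V : Submodule ℂ A} (hV : IsClosed (V : Set A))
    (hS : normalizerIn S ⊆ V) : ARegSet S ⊆ V := by
  refine closure_minimal (fun a ha => Submodule.span_le.2 hS ?_) hV
  rwa [← adjoin_normalizerIn_toSubmodule ℂ S]

theorem mul_mul_mem_inducedIdeal {J R : Set A} {j a₁ a₂ : A} (hj : j ∈ J) (h₁ : a₁ ∈ R)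
    (h₂ : a₂ ∈ R) : a₁ * j * a₂ ∈ inducedIdeal J R :=
  subset_closure (Submodule.subset_span ⟨j, hj, a₁, h₁, a₂, h₂, rfl⟩)

theorem inducedIdeal_subset {J R : Set A} {V : Submodule ℂ A} (hV : IsClosed (V : Set A))
    (h : ∀ j ∈ J, ∀ a₁ ∈ R, ∀ a₂ ∈ R, a₁ * j * a₂ ∈ V) : inducedIdeal J R ⊆ V := by
  refine closure_minimal (Submodule.span_le.2 ?_) hV
  rintro _ ⟨j, hj, a₁, h₁, a₂, h₂, rfl⟩
  exact h j hj a₁ h₁ a₂ h₂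

theorem isClosedIdealOf_inducedIdeal {J : Set A} {R : NonUnitalSubalgebra ℂ A}
    (hR : IsClosed (R : Set A)) (hJR : J ⊆ R) :
    IsClosedIdealOf (inducedIdeal J (R : Set A)) (R : Set A) := by
  obtain ⟨L, hL⟩ : ∃ L : Submodule ℂ A, inducedIdeal J (R : Set A) = L :=
    ⟨(Submodule.span ℂ _).topologicalClosure, rfl⟩
  have hLc : IsClosed (L : Set A) := hL ▸ isClosed_closure
  have hmem {j a₁ a₂ : A} (hj : j ∈ J) (h₁ : a₁ ∈ R) (h₂ : a₂ ∈ R) : a₁ * j * a₂ ∈ L :=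
    hL.subset (mul_mul_mem_inducedIdeal hj h₁ h₂)
  have hLR : inducedIdeal J (R : Set A) ⊆ R := inducedIdeal_subset (V := R.toSubmodule) hR
    fun j hj a₁ h₁ a₂ h₂ => R.mul_mem (R.mul_mem h₁ (hJR hj)) h₂
  have hleft {b : A} (hb : b ∈ R) :
      inducedIdeal J (R : Set A) ⊆ L.comap (LinearMap.mulLeft ℂ b) := by
    refine inducedIdeal_subset (hLc.preimage (continuous_const_mul b)) fun j hj a₁ h₁ a₂ h₂ => ?_
    simpa only [Submodule.mem_comap, LinearMap.mulLeft_apply, mul_assoc]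
      using hmem hj (R.mul_mem hb h₁) h₂
  have hright {b : A} (hb : b ∈ R) :
      inducedIdeal J (R : Set A) ⊆ L.comap (LinearMap.mulRight ℂ b) := by
    refine inducedIdeal_subset (hLc.preimage (continuous_mul_const b)) fun j hj a₁ h₁ a₂ h₂ => ?_
    simpa only [Submodule.mem_comap, LinearMap.mulRight_apply, mul_assoc]
      using hmem hj h₁ (R.mul_mem h₂ hb)
  rw [hL] at hLR hleft hright ⊢
  exact ⟨hLR, hLc, L.zero_mem, fun _ hx _ hy => L.add_mem hx hy, fun c _ hx => L.smul_mem c hx,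
    fun _ hx _ hb => ⟨hleft hb hx, hright hb hx⟩⟩

theorem inducedIdeal_inter_subset {M : Type*} [SetLike M A] [StarMemClass M A] {B : M}
    {J R : Set A} (hJ : IsClosedIdealOf J (B : Set A)) (hR : R ⊆ ARegSet J) :
    inducedIdeal J R ∩ B ⊆ J := by
  obtain ⟨l, hne, hlJ, hl, hfixed⟩ := hJ.exists_approximateUnit
  obtain ⟨hJB, hJc, -, -, -, hJmul⟩ := hJ
  have hVc : IsClosed (approxLeftFixed ℂ l : Set A) := isClosed_approxLeftFixed ℂ hl
  have hnormalizer {j : A} (hj : j ∈ J) :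
      normalizerIn J ⊆ (approxLeftFixed ℂ l).comap (LinearMap.mulRight ℂ j) := fun n hn => by
    have hjj : j * star j ∈ J := (hJmul j hj _ (star_mem (hJB hj))).2
    refine hfixed (n * j) ?_
    simpa only [star_mul, mul_assoc] using (hn _ hjj).1
  have hRJ {j a : A} (hj : j ∈ J) (ha : a ∈ R) : a * j ∈ approxLeftFixed ℂ l :=
    aRegSet_subset (hVc.preimage (continuous_mul_const j)) (hnormalizer hj) (hR ha)
  have hL : inducedIdeal J R ⊆ approxLeftFixed ℂ l :=
    inducedIdeal_subset hVc fun j hj a₁ h₁ a₂ _ => mul_mem_approxLeftFixed (hRJ hj h₁) a₂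
  rintro b ⟨hbL, hbB⟩
  exact hJc.mem_of_tendsto (hL hbL) (hlJ.mono fun u hu => (hJmul u hu b hbB).2)

end Ideal

theorem stmt16_general {A : Type*} [NonUnitalCStarAlgebra A] (B : NonUnitalStarSubalgebra ℂ A)
    {J : Set A} (hJ : IsClosedIdealOf J (B : Set A)) (hJproper : J ≠ (B : Set A))
    (hgen : ARegSet (B : Set A) ⊆ ARegSet J) :
    IsClosedIdealOf (inducedIdeal J (ARegSet (B : Set A))) (ARegSet (B : Set A)) ∧
    inducedIdeal J (ARegSet (B : Set A)) ≠ ARegSet (B : Set A) := by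
  have hBreg := subset_aRegSet B
  constructor
  · exact isClosedIdealOf_inducedIdeal
      (R := (NonUnitalStarAlgebra.adjoin ℂ (normalizerIn (B : Set A))).topologicalClosure
        |>.toNonUnitalSubalgebra) isClosed_closure (hJ.1.trans hBreg)
  · intro hL
    have hBJ : (B : Set A) ⊆ J := fun b hb =>
      inducedIdeal_inter_subset hJ hgen ⟨hL.symm.subset (hBreg hb), hb⟩
    exact hJproper (hJ.1.antisymm hBJ)

/-- If `J ⊲ B` is a proper closed two-sided ideal such that
`N_A(B) ∩ N_A(J)` generates `A^reg`, then the closed span of `{a₁ x a₂ : x ∈ J, a₁, a₂ ∈ A^reg}`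
is a proper closed two-sided ideal of `A^reg`. -/
theorem stmt16 {A : Type*} [NonUnitalCStarAlgebra A]
    (B : NonUnitalStarSubalgebra ℂ A) (hBclosed : IsClosed (B : Set A))
    (hnd : NondegSet (B : Set A))
    (J : Set A) (hJ : IsClosedIdealOf J (B : Set A)) (hJproper : J ≠ (B : Set A))
    (hgen : closure (NonUnitalStarAlgebra.adjoin ℂ
        (normalizerIn (B : Set A) ∩ normalizerIn J) : Set A) = ARegSet (B : Set A)) :
    IsClosedIdealOf (inducedIdeal J (ARegSet (B : Set A))) (ARegSet (B : Set A)) ∧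
    inducedIdeal J (ARegSet (B : Set A)) ≠ ARegSet (B : Set A) :=
  stmt16_general B hJ hJproper <| hgen ▸ closure_mono
    (NonUnitalStarAlgebra.adjoin_mono Set.inter_subset_right)
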